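/- Let G be a finitely presented group. Then there exists a constant C depending only on G such that for every finite index subgroup H of G, the torsion subgroup of the abelianization H^{ab} has order at most C^{[G:H]}. -/

import Mathlib

/-- A group is finitely presented if it is isomorphic to a presented group on finitely
many generators with finitely many relations. -/
def IsFinitelyPresented (G : Type*) [Group G] : Prop :=
  ∃ (n : ℕ) (rels : Set (FreeGroup (Fin n))),
    rels.Finite ∧ Nonempty (G ≃* PresentedGroup rels)

/-!
Let `α` be the set of generators of a finite presentation and let `X = G ⧸ H`. The group `Hᵃᵇ` is
the first homology of the `X`-sheeted covering of the presentation complex, so it embeds in the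
cokernel `ℤ^(X × α) / Λ` of the second boundary map. The lattice `Λ` is spanned by the lifts of the
relators, whose `ℓ¹`-norms are at most the relator lengths. The embedding is obtained algebraically:
cocycles `G → (X → B)` over the action on `X` are the homomorphic sections `G → B ≀ G`, the one with
`B = ℤ^(X × α) / Λ` is universal among those with `B` abelian, and the Kaloujnine–Krasner embedding
is one with `B = Hᵃᵇ`.

The torsion of `ℤ^m / Λ` embeds in the quotient by a maximal independent set of basis vectors. This
is a finite quotient of `ℤ^m` by vectors of `ℓ¹`-norm at most `L`, so its order is at most the
determinant of an `m × m` matrix whose rows have `ℓ¹`-norm at most `L`, hence at most `L ^ m`.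
-/

section LatticeTorsion

theorem abv_det_le_prod_sum {R S n : Type*} [CommRing R] [Nontrivial R] [CommRing S]
    [LinearOrder S] [IsStrictOrderedRing S] [Fintype n] [DecidableEq n]
    (abv : AbsoluteValue R S) (A : Matrix n n R) : abv A.det ≤ ∏ i, ∑ j, abv (A i j) := by
  let perms : Finset (n → n) := Finset.univ.map ⟨fun σ : Equiv.Perm n ↦ σ, DFunLike.coe_injective⟩
  calc
    abv A.det ≤ ∑ σ : Equiv.Perm n, abv (Equiv.Perm.sign σ • ∏ i, A i (σ i)) := by
      rw [← Matrix.det_transpose, Matrix.det_apply]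
      exact abv.sum_le _ _
    _ = ∑ f ∈ perms, ∏ i, abv (A i (f i)) := by
      simp [perms, abv.map_units_int_smul, abv.map_prod]
    _ ≤ ∑ f : n → n, ∏ i, abv (A i (f i)) :=
      Finset.sum_le_sum_of_subset_of_nonneg (Finset.subset_univ _) fun f _ _ ↦
        Finset.prod_nonneg fun i _ ↦ abv.nonneg _
    _ = ∏ i, ∑ j, abv (A i j) := by
      rw [Finset.prod_univ_sum, Fintype.piFinset_univ]

variable {ι : Type*} [Fintype ι]

/-- The `ℓ¹`-norm of an integer vector, valued in `ℕ` so that it can bound cardinalities. -/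
def l1Norm (v : ι → ℤ) : ℕ := ∑ i, (v i).natAbs

theorem l1Norm_zero : l1Norm (0 : ι → ℤ) = 0 := by simp [l1Norm]

theorem l1Norm_add_le (v w : ι → ℤ) : l1Norm (v + w) ≤ l1Norm v + l1Norm w := by
  simp only [l1Norm, ← Finset.sum_add_distrib]
  exact Finset.sum_le_sum fun i _ ↦ Int.natAbs_add_le (v i) (w i)

theorem l1Norm_neg (v : ι → ℤ) : l1Norm (-v) = l1Norm v := by simp [l1Norm]

theorem l1Norm_single [DecidableEq ι] (i : ι) (n : ℤ) : l1Norm (Pi.single i n) = n.natAbs := by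
  rw [l1Norm, Fintype.sum_eq_single i fun j hj ↦ by simp [hj], Pi.single_eq_same]

theorem natAbs_det_le_prod_l1Norm [DecidableEq ι] (A : Matrix ι ι ℤ) :
    A.det.natAbs ≤ ∏ i, l1Norm (A i) := by
  have h := abv_det_le_prod_sum AbsoluteValue.abs A
  simp only [AbsoluteValue.abs_apply, Int.abs_eq_natAbs] at h
  simpa only [l1Norm] using mod_cast h

theorem card_quotient_span_range_le_prod_l1Norm {w : ι → ι → ℤ} (hw : LinearIndependent ℤ w) :
    Nat.card ((ι → ℤ) ⧸ Submodule.span ℤ (Set.range w)) ≤ ∏ i, l1Norm (w i) := by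
  classical
  have hcoe : (↑) ∘ Module.Basis.span hw = w := funext fun i ↦ by simp [Module.Basis.span_apply]
  have hmat : (Pi.basisFun ℤ ι).toMatrix w = (Matrix.of w).transpose := by
    ext i j
    simp [Module.Basis.toMatrix_apply]
  rw [← Submodule.natAbs_det_basis_change (Pi.basisFun ℤ ι) _ (Module.Basis.span hw), hcoe,
    Module.Basis.det_apply, hmat, Matrix.det_transpose]
  exact natAbs_det_le_prod_l1Norm _

theorem exists_linearIndepOn_isTorsion_quotient_span {R M κ : Type*} [CommRing R] [IsDomain R]
    [AddCommGroup M] [Module R M] (v : κ → M)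
    (hv : Module.IsTorsion R (M ⧸ Submodule.span R (Set.range v))) :
    ∃ s : Set κ, LinearIndepOn R v s ∧ Module.IsTorsion R (M ⧸ Submodule.span R (v '' s)) := by
  obtain ⟨s, hs, hmax⟩ := exists_maximal_linearIndepOn R v
  refine ⟨s, hs, ?_⟩
  set N := Submodule.span R (v '' s)
  have hspan : Submodule.span R (Set.range v) ≤ (Submodule.torsion R (M ⧸ N)).comap N.mkQ := by
    rw [Submodule.span_le]
    rintro _ ⟨k, rfl⟩
    by_cases hk : k ∈ s
    · refine Submodule.mem_comap.2 ?_
      rw [show N.mkQ (v k) = 0 from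
        (Submodule.Quotient.mk_eq_zero N).2 (Submodule.subset_span ⟨k, hk, rfl⟩)]
      exact zero_mem _
    · obtain ⟨a, ha, hak⟩ := hmax k hk
      refine (Submodule.mem_torsion_iff _).2 ⟨⟨a, mem_nonZeroDivisors_of_ne_zero ha⟩, ?_⟩
      exact (Submodule.Quotient.mk_eq_zero N).2 hak
  intro x
  obtain ⟨x, rfl⟩ := N.mkQ_surjective x
  obtain ⟨a, ha⟩ := @hv (Submodule.Quotient.mk x)
  have hax : a • x ∈ Submodule.span R (Set.range v) := (Submodule.Quotient.mk_eq_zero _).1 ha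
  obtain ⟨b, hb⟩ := (Submodule.mem_torsion_iff _).1 (hspan hax)
  exact ⟨b * a, by rw [mul_smul]; exact hb⟩

theorem disjoint_torsion_span_image {R M κ : Type*} [CommRing R] [IsDomain R]
    [AddCommGroup M] [Module R M] {v : κ → M} {s : Set κ} (hs : LinearIndepOn R v s) :
    Disjoint (Submodule.torsion R M) (Submodule.span R (v '' s)) := by
  have hfree : Module.Free R (Submodule.span R (v '' s)) := by
    rw [Set.image_eq_range]
    exact Module.Free.of_basis (Module.Basis.span hs)
  rw [Submodule.disjoint_def]
  intro x hx hxs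
  obtain ⟨a, ha⟩ := (Submodule.mem_torsion_iff x).1 hx
  have hax : (a : R) • (⟨x, hxs⟩ : Submodule.span R (v '' s)) = 0 := Subtype.ext ha
  exact congrArg Subtype.val ((smul_eq_zero_iff_right (nonZeroDivisors.coe_ne_zero a)).1 hax)

theorem card_quotient_span_le_pow_of_finite {S : Set (ι → ℤ)} {L : ℕ}
    (hS : ∀ v ∈ S, l1Norm v ≤ L) [Finite ((ι → ℤ) ⧸ Submodule.span ℤ S)] :
    Nat.card ((ι → ℤ) ⧸ Submodule.span ℤ S) ≤ L ^ Fintype.card ι := by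
  obtain ⟨B, hB, htors⟩ := exists_linearIndepOn_isTorsion_quotient_span ((↑) : S → ι → ℤ) (by
    rw [Subtype.range_coe]
    exact isAddTorsion_iff_isTorsion_int.1 isAddTorsion_of_finite)
  rw [Set.image_eq_range] at htors
  have hfin := Module.finite_of_fg_torsion _ htors
  let e := ((Module.Basis.span hB).map (LinearEquiv.ofFinrankEq _ _
    ((Submodule.finiteQuotient_iff _).1 hfin))).indexEquiv (Pi.basisFun ℤ ι)
  let w : ι → ι → ℤ := fun i ↦ (e.symm i : S)
  have hw : LinearIndependent ℤ w := hB.comp _ e.symm.injective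
  have hrange : Set.range w = Set.range fun b : B ↦ ((b : S) : ι → ℤ) :=
    e.symm.surjective.range_comp fun b : B ↦ ((b : S) : ι → ℤ)
  have hle : Submodule.span ℤ (Set.range w) ≤ Submodule.span ℤ S :=
    Submodule.span_mono (by rintro _ ⟨i, rfl⟩; exact Subtype.coe_prop _)
  rw [← hrange] at hfin
  calc
    Nat.card ((ι → ℤ) ⧸ Submodule.span ℤ S)
      ≤ Nat.card ((ι → ℤ) ⧸ Submodule.span ℤ (Set.range w)) :=
        Nat.card_le_card_of_surjective _ (Submodule.factor_surjective hle)
    _ ≤ ∏ i, l1Norm (w i) := card_quotient_span_range_le_prod_l1Norm hw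
    _ ≤ L ^ Fintype.card ι := by
        simpa using Finset.prod_le_pow_card Finset.univ _ L fun i _ ↦ hS _ (Subtype.coe_prop _)

theorem card_torsion_quotient_span_le_pow {S : Set (ι → ℤ)} {L : ℕ} (hL : 1 ≤ L)
    (hS : ∀ v ∈ S, l1Norm v ≤ L) :
    Nat.card (Submodule.torsion ℤ ((ι → ℤ) ⧸ Submodule.span ℤ S)) ≤ L ^ Fintype.card ι := by
  let Λ := Submodule.span ℤ S
  let b := Pi.basisFun ℤ ι
  have hspan : Submodule.span ℤ (Set.range (Λ.mkQ ∘ b)) = ⊤ := by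
    rw [Set.range_comp, Submodule.span_image, b.span_eq, Submodule.map_top, Submodule.range_mkQ]
  obtain ⟨J, hJ, htors⟩ := exists_linearIndepOn_isTorsion_quotient_span (Λ.mkQ ∘ b) (by
    rw [hspan]
    exact fun x ↦ ⟨1, Subsingleton.elim _ _⟩)
  have hdisj := disjoint_torsion_span_image hJ
  have hfin := Module.finite_of_fg_torsion _ htors
  rw [Set.image_comp, Submodule.span_image] at hdisj hfin
  let N := (Submodule.span ℤ (b '' J)).map Λ.mkQ
  let e : (((ι → ℤ) ⧸ Λ) ⧸ N) ≃ₗ[ℤ] (ι → ℤ) ⧸ Submodule.span ℤ (S ∪ b '' J) :=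
    (Submodule.quotientQuotientEquivQuotientSup _ _).trans
      (Submodule.quotEquivOfEq _ _ (Submodule.span_union _ _).symm)
  have hfin' := Finite.of_equiv _ e.toEquiv
  calc
    Nat.card (Submodule.torsion ℤ ((ι → ℤ) ⧸ Λ)) ≤ Nat.card (((ι → ℤ) ⧸ Λ) ⧸ N) :=
        Nat.card_le_card_of_injective (N.mkQ.domRestrict _)
          (LinearMap.injective_domRestrict_iff.2 (by rwa [Submodule.ker_mkQ]))
    _ = Nat.card ((ι → ℤ) ⧸ Submodule.span ℤ (S ∪ b '' J)) := Nat.card_congr e.toEquiv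
    _ ≤ L ^ Fintype.card ι := by
        refine card_quotient_span_le_pow_of_finite ?_
        rintro v (hv | ⟨j, -, rfl⟩)
        · exact hS v hv
        · classical simpa [b, l1Norm_single] using hL

end LatticeTorsion

/-- The permutational (unrestricted) wreath product of `A` by a group `G` acting on `X`. A
homomorphism `g ↦ (c g, g)` into it is a cocycle `c`, with
`c (g * h) x = c g x * c h (g⁻¹ • x)`. -/
abbrev WreathProduct (A G X : Type*) [Group A] [Group G] [MulAction G X] : Type _ :=
  (X → A) ⋊[(mulAutArrow : G →* MulAut (X → A))] G

namespace WreathProduct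

variable {A B G X : Type*} [Group A] [Group B] [Group G] [MulAction G X]

theorem left_mul_apply (u v : WreathProduct A G X) (x : X) :
    (u * v).left x = u.left x * v.left (u.right⁻¹ • x) := rfl

/-- The homomorphism of wreath products applying `f` to every coordinate. -/
def map (f : A →* B) : WreathProduct A G X →* WreathProduct B G X :=
  SemidirectProduct.map (f.compLeft X) (MonoidHom.id G) fun _ ↦ rfl

theorem left_map_apply (f : A →* B) (u : WreathProduct A G X) (x : X) :
    (map f u).left x = f (u.left x) := rfl

theorem right_map (f : A →* B) (u : WreathProduct A G X) : (map f u).right = u.right := rfl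

/-- The restriction of the cocycle underlying a splitting `σ` to a point stabilizer, where it
becomes a homomorphism. -/
def stabilizerHom (σ : G →* WreathProduct A G X) (hσ : ∀ g, (σ g).right = g) (x : X) :
    MulAction.stabilizer G x →* A :=
  .mk' (fun h ↦ (σ h).left x) fun h k ↦ by
    have hx : (h : G)⁻¹ • x = x := inv_smul_eq_iff.2 h.2.symm
    rw [Subgroup.coe_mul, map_mul, left_mul_apply, hσ, hx]

end WreathProduct

open WreathProduct

section Coset

variable {G : Type*} [Group G] (H : Subgroup G)

/-- The Kaloujnine–Krasner embedding of `G` determined by the transversal `Quotient.out`. -/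
noncomputable def cosetWreathHom : G →* WreathProduct H G (G ⧸ H) :=
  .mk' (fun g ↦ ⟨fun x ↦ ⟨x.out⁻¹ * g * (g⁻¹ • x).out, by
    rw [mul_assoc, ← QuotientGroup.eq, QuotientGroup.out_eq', ← smul_eq_mul,
      ← MulAction.Quotient.smul_coe, QuotientGroup.out_eq', smul_inv_smul]⟩, g⟩) fun g h ↦ by
    ext x
    · simp [left_mul_apply, mul_smul, mul_assoc]
    · rfl

variable {H} in
theorem of_left_cosetWreathHom (h : H) :
    Abelianization.of ((cosetWreathHom H h).left ((1 : G) : G ⧸ H)) = Abelianization.of h := by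
  let x : G ⧸ H := ((1 : G) : G ⧸ H)
  have hx : (h : G)⁻¹ • x = x := by
    rw [inv_smul_eq_iff, eq_comm]
    exact (MulAction.stabilizer_quotient H).ge h.2
  have hout : x.out ∈ H := by
    have := (QuotientGroup.out_eq' x).symm
    rw [QuotientGroup.eq] at this
    simpa using this
  have hconj : (cosetWreathHom H h).left x = (⟨x.out, hout⟩ : H)⁻¹ * h * ⟨x.out, hout⟩ := by
    ext
    simp [cosetWreathHom, hx]
  rw [hconj, map_mul, map_mul, map_inv, mul_comm, mul_inv_cancel_left]

variable {H} in
theorem exists_injective_abelianization_of_map_comp_eq {A : Type*} [CommGroup A]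
    (σ : G →* WreathProduct A G (G ⧸ H)) (q : A →* Abelianization H)
    (hq : (map q).comp σ = (map Abelianization.of).comp (cosetWreathHom H)) :
    ∃ Φ : Abelianization H →* A, Function.Injective Φ := by
  have hσ (g : G) : (σ g).right = g :=
    congrArg SemidirectProduct.right (DFunLike.congr_fun hq g)
  let φ : H →* A := (stabilizerHom σ hσ ((1 : G) : G ⧸ H)).comp
    (Subgroup.inclusion (MulAction.stabilizer_quotient H).ge)
  have hleft : q.comp (Abelianization.lift φ) = MonoidHom.id _ := by
    ext h
    have hcoord := congrArg
      (fun u : WreathProduct (Abelianization H) G (G ⧸ H) ↦ u.left ((1 : G) : G ⧸ H))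
      (DFunLike.congr_fun hq (h : G))
    exact hcoord.trans (of_left_cosetWreathHom h)
  exact ⟨Abelianization.lift φ, Function.LeftInverse.injective (DFunLike.congr_fun hleft)⟩

end Coset

theorem exists_comp_eq_of_ker_eq_normalClosure {F G K : Type*} [Group F] [Group G] [Group K]
    {p : F →* G} (hp : Function.Surjective p) {rels : Set F}
    (hker : p.ker = Subgroup.normalClosure rels) {φ : F →* K} (hφ : ∀ r ∈ rels, φ r = 1) :
    ∃ ψ : G →* K, ψ.comp p = φ :=
  ⟨p.liftOfSurjective hp ⟨φ, hker.trans_le (Subgroup.normalClosure_le_normal hφ)⟩,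
    p.liftOfRightInverse_comp _ _ _⟩

section SchreierGraph

variable {α G : Type*} [DecidableEq α] [Group G] (p : FreeGroup α →* G)
variable (X : Type*) [DecidableEq X] [MulAction G X]

/-- The homomorphism over `p` whose value at a generator `i` has as coordinate at each `x` the edge
labelled `i` ending at `x` in the Schreier graph of the action of `G` on `X`. The edges of this
graph are encoded as elements `(x, i)` of `X × α`. -/
def pathHom : FreeGroup α →* WreathProduct (Multiplicative (X × α → ℤ)) G X :=
  FreeGroup.lift fun i ↦ ⟨fun x ↦ .ofAdd (Pi.single (x, i) 1), p (.of i)⟩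

theorem right_pathHom (w : FreeGroup α) : (pathHom p X w).right = p w := by
  have : SemidirectProduct.rightHom.comp (pathHom p X) = p := by
    ext i
    simp [pathHom]
  exact DFunLike.congr_fun this w

variable {X} in
/-- The cellular `1`-chain, in the Schreier graph with edge set `X × α`, of the path labelled by `w`
that ends at `x`. -/
def pathChain (w : FreeGroup α) (x : X) : X × α → ℤ := ((pathHom p X w).left x).toAdd

variable {p X}

theorem pathChain_mul (u v : FreeGroup α) (x : X) :
    pathChain p (u * v) x = pathChain p u x + pathChain p v ((p u)⁻¹ • x) := by
  simp only [pathChain, map_mul, left_mul_apply, right_pathHom, toAdd_mul]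

theorem pathChain_one (x : X) : pathChain p 1 x = 0 := by
  simp [pathChain]

theorem pathChain_of (i : α) (x : X) : pathChain p (.of i) x = Pi.single (x, i) 1 := by
  simp [pathChain, pathHom]

theorem pathChain_inv_of (i : α) (x : X) :
    pathChain p (.of i)⁻¹ x = -Pi.single (p (.of i) • x, i) 1 := by
  have h := pathChain_mul (p := p) (.of i) (.of i)⁻¹ (p (.of i) • x)
  rw [mul_inv_cancel, pathChain_one, pathChain_of, inv_smul_smul] at h
  exact eq_neg_of_add_eq_zero_right h.symm

theorem l1Norm_pathChain_le_norm [Fintype α] [Fintype X] (w : FreeGroup α) (x : X) :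
    l1Norm (pathChain p w x) ≤ w.norm := by
  have hlist (l : List (α × Bool)) (x : X) : l1Norm (pathChain p (.mk l) x) ≤ l.length := by
    induction l generalizing x with
    | nil => rw [← FreeGroup.one_eq_mk, pathChain_one, l1Norm_zero, List.length_nil]
    | cons a l ih =>
      have hletter : l1Norm (pathChain p (.mk [a]) x) = 1 := by
        obtain ⟨i, _ | _⟩ := a
        · rw [show FreeGroup.mk [(i, false)] = (.of i)⁻¹ from rfl, pathChain_inv_of, l1Norm_neg,
            l1Norm_single, Int.natAbs_one]
        · rw [show FreeGroup.mk [(i, true)] = .of i from rfl, pathChain_of, l1Norm_single,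
            Int.natAbs_one]
      rw [← List.singleton_append, ← FreeGroup.mul_mk, pathChain_mul, List.length_append]
      exact (l1Norm_add_le _ _).trans (Nat.add_le_add hletter.le (ih _))
  have h := hlist w.toWord x
  rwa [FreeGroup.mk_toWord] at h

theorem exists_map_comp_pathHom_eq [Finite α] [Finite X] {B : Type*} [CommGroup B]
    (τ : FreeGroup α →* WreathProduct B G X) (hτ : ∀ w, (τ w).right = p w) :
    ∃ f : (X × α → ℤ) →ₗ[ℤ] Additive B,
      (map (AddMonoidHom.toMultiplicativeLeft f.toAddMonoidHom)).comp (pathHom p X) = τ := by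
  have := Fintype.ofFinite (X × α)
  let f : (X × α → ℤ) →ₗ[ℤ] Additive B :=
    Fintype.linearCombination ℤ fun e ↦ .ofMul ((τ (.of e.2)).left e.1)
  refine ⟨f, FreeGroup.ext_hom _ _ fun i ↦ SemidirectProduct.ext (funext fun x ↦ ?_) ?_⟩
  · change (f (pathChain p (.of i) x)).toMul = (τ (.of i)).left x
    rw [pathChain_of, Fintype.linearCombination_apply_single, one_smul, toMul_ofMul]
  · simp [right_map, right_pathHom, hτ]

variable (X) in
/-- The image of the second cellular boundary map of the covering of the presentation complex
associated with `X`: the span of all lifts of relators to the Schreier graph. -/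
def relatorLattice (p : FreeGroup α →* G) (rels : Set (FreeGroup α)) : Submodule ℤ (X × α → ℤ) :=
  Submodule.span ℤ {v | ∃ r ∈ rels, ∃ x : X, pathChain p r x = v}

theorem exists_comp_eq_map_mkQ_comp_pathHom (hp : Function.Surjective p)
    {rels : Set (FreeGroup α)} (hker : p.ker = Subgroup.normalClosure rels) :
    ∃ σ : G →* WreathProduct (Multiplicative ((X × α → ℤ) ⧸ relatorLattice X p rels)) G X,
      σ.comp p =
        (map (relatorLattice X p rels).mkQ.toAddMonoidHom.toMultiplicative).comp (pathHom p X) := by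
  refine exists_comp_eq_of_ker_eq_normalClosure hp hker fun r hr ↦
    SemidirectProduct.ext (funext fun x ↦ ?_) ?_
  · exact (Submodule.Quotient.mk_eq_zero _).2 (Submodule.subset_span ⟨r, hr, x, rfl⟩)
  · exact (right_pathHom p X r).trans (hker.ge (Subgroup.subset_normalClosure hr))

theorem relatorLattice_le_ker {B : Type*} [CommGroup B] {rels : Set (FreeGroup α)}
    {f : (X × α → ℤ) →ₗ[ℤ] Additive B}
    (hf : ∀ r ∈ rels, map (AddMonoidHom.toMultiplicativeLeft f.toAddMonoidHom)
      (pathHom p X r) = 1) :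
    relatorLattice X p rels ≤ LinearMap.ker f := by
  rw [relatorLattice, Submodule.span_le]
  rintro _ ⟨r, hr, x, rfl⟩
  exact congrFun (congrArg SemidirectProduct.left (hf r hr)) x

theorem exists_map_comp_eq_of_comp_eq_map_mkQ_comp_pathHom [Finite α] [Finite X]
    (hp : Function.Surjective p) {rels : Set (FreeGroup α)} (hrels : ∀ r ∈ rels, p r = 1)
    {σ : G →* WreathProduct (Multiplicative ((X × α → ℤ) ⧸ relatorLattice X p rels)) G X}
    (hσ : σ.comp p =
      (map (relatorLattice X p rels).mkQ.toAddMonoidHom.toMultiplicative).comp (pathHom p X))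
    {B : Type*} [CommGroup B] (τ : G →* WreathProduct B G X) (hτ : ∀ g, (τ g).right = g) :
    ∃ q : Multiplicative ((X × α → ℤ) ⧸ relatorLattice X p rels) →* B, (map q).comp σ = τ := by
  obtain ⟨f, hf⟩ := exists_map_comp_pathHom_eq (p := p) (τ.comp p) fun w ↦ hτ (p w)
  have hker : relatorLattice X p rels ≤ LinearMap.ker f := relatorLattice_le_ker fun r hr ↦ by
    rw [← MonoidHom.comp_apply, hf, MonoidHom.comp_apply, hrels r hr, map_one]
  refine ⟨AddMonoidHom.toMultiplicativeLeft
    ((relatorLattice X p rels).liftQ f hker).toAddMonoidHom, (MonoidHom.cancel_right hp).1 ?_⟩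
  rw [MonoidHom.comp_assoc, hσ, ← hf]
  rfl

theorem exists_injective_abelianization_quotient_relatorLattice [Finite α]
    (hp : Function.Surjective p) {rels : Set (FreeGroup α)}
    (hker : p.ker = Subgroup.normalClosure rels)
    (H : Subgroup G) [DecidableEq (G ⧸ H)] [H.FiniteIndex] :
    ∃ Φ : Abelianization H →*
        Multiplicative (((G ⧸ H) × α → ℤ) ⧸ relatorLattice (G ⧸ H) p rels),
      Function.Injective Φ := by
  obtain ⟨σ, hσ⟩ := exists_comp_eq_map_mkQ_comp_pathHom (X := G ⧸ H) hp hker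
  obtain ⟨q, hq⟩ := exists_map_comp_eq_of_comp_eq_map_mkQ_comp_pathHom hp
    (fun r hr ↦ hker.ge (Subgroup.subset_normalClosure hr)) hσ
    ((map Abelianization.of).comp (cosetWreathHom H)) fun _ ↦ rfl
  exact exists_injective_abelianization_of_map_comp_eq σ q hq

end SchreierGraph

theorem card_torsion_le_of_injective {A M : Type*} [CommGroup A] [AddCommGroup M]
    [Finite (Submodule.torsion ℤ M)] {Φ : A →* Multiplicative M} (hΦ : Function.Injective Φ) :
    Nat.card (CommGroup.torsion A) ≤ Nat.card (Submodule.torsion ℤ M) := by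
  have hmem (a : CommGroup.torsion A) : (Φ a).toAdd ∈ Submodule.torsion ℤ M := by
    obtain ⟨k, hk, hka⟩ := isOfFinOrder_iff_pow_eq_one.1 a.2
    refine (Submodule.mem_torsion_iff _).2
      ⟨⟨k, mem_nonZeroDivisors_of_ne_zero (Int.natCast_ne_zero.2 hk.ne')⟩, ?_⟩
    simpa [Submonoid.smul_def] using congrArg (fun b ↦ (Φ b).toAdd) hka
  exact Nat.card_le_card_of_injective (fun a ↦ ⟨(Φ a).toAdd, hmem a⟩) fun a b hab ↦
    Subtype.ext (hΦ (congrArg (Multiplicative.ofAdd ∘ Subtype.val) hab))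

theorem card_torsion_abelianization_le {α G : Type*} [Fintype α] [DecidableEq α] [Group G]
    {p : FreeGroup α →* G} (hp : Function.Surjective p) {rels : Set (FreeGroup α)}
    (hker : p.ker = Subgroup.normalClosure rels) {L : ℕ} (hL : 1 ≤ L)
    (hrels : ∀ r ∈ rels, r.norm ≤ L) (H : Subgroup G) [H.FiniteIndex] :
    Nat.card (CommGroup.torsion (Abelianization H)) ≤ L ^ (H.index * Fintype.card α) := by
  classical
  have := Fintype.ofFinite (G ⧸ H)
  obtain ⟨Φ, hΦ⟩ := exists_injective_abelianization_quotient_relatorLattice hp hker H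
  let M := ((G ⧸ H) × α → ℤ) ⧸ relatorLattice (G ⧸ H) p rels
  have : Finite (Submodule.torsion ℤ M) :=
    Module.finite_of_fg_torsion _ (Submodule.torsion_isTorsion)
  calc
    Nat.card (CommGroup.torsion (Abelianization H)) ≤ Nat.card (Submodule.torsion ℤ M) :=
      card_torsion_le_of_injective hΦ
    _ ≤ L ^ Fintype.card ((G ⧸ H) × α) := by
      refine card_torsion_quotient_span_le_pow hL ?_
      rintro _ ⟨r, hr, x, rfl⟩
      exact (l1Norm_pathChain_le_norm r x).trans (hrels r hr)
    _ = L ^ (H.index * Fintype.card α) := by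
      rw [Fintype.card_prod, ← Nat.card_eq_fintype_card, Subgroup.index]

theorem stmt_5 (G : Type*) [Group G] (hG : IsFinitelyPresented G) :
    ∃ C : ℕ, ∀ H : Subgroup G, H.index ≠ 0 →
      Nat.card (CommGroup.torsion (Abelianization H)) ≤ C ^ H.index := by
  obtain ⟨n, rels, hfin, ⟨e⟩⟩ := hG
  let p : FreeGroup (Fin n) →* G := e.symm.toMonoidHom.comp (PresentedGroup.mk rels)
  have hp : Function.Surjective p := e.symm.surjective.comp (PresentedGroup.mk_surjective rels)
  have hker : p.ker = Subgroup.normalClosure rels := by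
    ext w
    simp [p, MonoidHom.mem_ker, PresentedGroup.mk_eq_one_iff]
  let L := 1 + ∑ r ∈ hfin.toFinset, r.norm
  have hrels (r) (hr : r ∈ rels) : r.norm ≤ L :=
    (Finset.single_le_sum_of_canonicallyOrdered (f := FreeGroup.norm)
      (hfin.mem_toFinset.2 hr)).trans (Nat.le_add_left _ _)
  refine ⟨L ^ n, fun H hH ↦ ?_⟩
  have : H.FiniteIndex := ⟨hH⟩
  simpa only [← pow_mul, mul_comm n, Fintype.card_fin] using
    card_torsion_abelianization_le hp hker (Nat.le_add_right _ _) hrels H
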